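/- Let (X,d,μ) be an η-Ahlfors regular quasi-metric measure space with η > 0 and triangular constant κ ≥ 1, let 0 < γ < 2η and set σ = (2η−γ)/(2η). Suppose p₁, p₂, p₃ satisfy σ < 1/p₁ < 1, 0 < 1/p₂ < 1, 2σ < 1/p₁ + 1/p₂ < 1 + σ and 1/p₃ = 1/p₁ + 1/p₂ − 2σ. Then there exists C > 0 such that ‖I_{η−γ/2}(g · I_{η−γ/2}f)‖_{L^{p₃}(μ)} ≤ C ‖f‖_{L^{p₁}(μ)} ‖g‖_{L^{p₂}(μ)} for every f ∈ L^{p₁}(X,μ) and g ∈ L^{p₂}(X,μ) nonnegative. -/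

import Mathlib

open MeasureTheory ENNReal

/-- The third order hypermetric induced by `d`:
`ρ(x,y,z) = inf_{u ∈ X} max {d(x,u), d(y,u), d(z,u)}`. -/
noncomputable def hyperRho {X : Type*} (d : X → X → ℝ) (x y z : X) : ℝ :=
  ⨅ u : X, max (d x u) (max (d y u) (d z u))

/-- `d` is a quasi-metric on `X` with triangular constant `κ`. -/
def IsQuasiMetric {X : Type*} (d : X → X → ℝ) (κ : ℝ) : Prop :=
  (∀ x y, 0 ≤ d x y) ∧ (∀ x y, (d x y = 0 ↔ x = y)) ∧ (∀ x y, d x y = d y x) ∧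
    (∀ x y z, d x z ≤ κ * (d x y + d y z))

/-- `(X,d,μ)` is `η`-Ahlfors regular with constants `a ≤ A`. -/
def IsAhlfors {X : Type*} [MeasurableSpace X] (d : X → X → ℝ) (μ : Measure X)
    (η a A : ℝ) : Prop :=
  ∀ x : X, ∀ r : ℝ, 0 < r →
    ENNReal.ofReal (a * r ^ η) ≤ μ {y | d x y < r} ∧
      μ {y | d x y < r} ≤ ENNReal.ofReal (A * r ^ η)

/-- The bilinear fractional integral operator
`T^γ(f,g)(x) = ∬ f(y) g(z) ρ(x,y,z)^{-γ} dμ(y) dμ(z)`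
(with the convention `0 ^ (-γ) = ∞` for `γ > 0`, as in `ENNReal.rpow`). -/
noncomputable def Tgamma {X : Type*} [MeasurableSpace X] (d : X → X → ℝ)
    (μ : Measure X) (γ : ℝ) (f g : X → ℝ≥0∞) (x : X) : ℝ≥0∞ :=
  ∫⁻ y, ∫⁻ z, f y * g z * (ENNReal.ofReal (hyperRho d x y z)) ^ (-γ) ∂μ ∂μ

/-- The linear fractional integral operator of order `β` in the `η`-dimensional
space `(X,d,μ)`: `I_β h(x) = ∫ h(y) d(x,y)^{β-η} dμ(y)`. -/
noncomputable def fracInt {X : Type*} [MeasurableSpace X] (d : X → X → ℝ)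
    (μ : Measure X) (β η : ℝ) (h : X → ℝ≥0∞) (x : X) : ℝ≥0∞ :=
  ∫⁻ y, h y * (ENNReal.ofReal (d x y)) ^ (β - η) ∂μ

/-- The `L^p(μ)` norm of a nonnegative function, `p` a real exponent. -/
noncomputable def lpNorm {X : Type*} [MeasurableSpace X] (μ : Measure X) (p : ℝ)
    (h : X → ℝ≥0∞) : ℝ≥0∞ :=
  (∫⁻ x, (h x) ^ p ∂μ) ^ (1 / p)

/-!
Two applications of the Hardy–Littlewood–Sobolev inequality joined by Hölder's inequality:
`I_β₁` maps `L^p₁` to `L^q` with `1/q = 1/p₁ - β₁/η`, multiplication by `g ∈ L^p₂` maps `L^q` to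
`L^s` with `1/s = 1/p₂ + 1/q`, and `I_β₂` maps `L^s` to `L^p₃`.

The upper ball bound says that `d ^ (-θ)` is uniformly in weak `L^(η/θ)` in each variable, so the
Hardy–Littlewood–Sobolev inequality is the weak-type Young inequality: a kernel `k` uniformly in
weak `L^r` in each variable maps `L^p` to `L^q` for `1/q = 1/p + 1/r - 1`. To prove it without
interpolation, let `‖f‖_p ≤ 1` and
`G x = ∫ f y * k x y * min (k x y ^ r) (f y ^ p) ^ (1 - 1/q) dy`.
Split `∫ f y * k x y dy` at a level `s` into the parts `k ≤ s`; `s < k` and `f ≤ s ^ (r/p)`;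
`s < k` and `s ^ (r/p) < f`. The first two are `O(s ^ (r/q))` and the third is at most
`s ^ (-r * (1 - 1/q)) * G x`, so `s = G x ^ (1/r)` yields `(∫ f y * k x y dy) ^ q ≤ C * G x`.
Integrating in `x` first, with `k` split at the level `f y ^ (p/r)`, gives
`∫ G ≤ C * ∫ f ^ p`.
-/

lemma exists_two_pow_mul_near {s x : ℝ≥0∞} (hs : s ≠ 0) (hsx : s ≤ x) (hx : x ≠ ∞) :
    ∃ k : ℕ, 2 ^ k * s ≤ x ∧ x ≤ 2 ^ (k + 1) * s := by
  lift x to NNReal using hx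
  lift s to NNReal using ne_top_of_le_ne_top coe_ne_top hsx
  have hs₀ : 0 < s := pos_of_ne_zero (by exact_mod_cast hs)
  obtain ⟨k, hk, hk'⟩ := exists_nat_pow_near ((one_le_div hs₀).2 (by exact_mod_cast hsx))
    (one_lt_two (α := NNReal))
  exact ⟨k, by exact_mod_cast (le_div_iff₀ hs₀).1 hk,
    by exact_mod_cast ((div_lt_iff₀ hs₀).1 hk').le⟩

lemma exists_inv_two_pow_mul_near {s x : ℝ≥0∞} (hx : x ≠ 0) (hxs : x ≤ s) (hs : s ≠ ∞) :
    ∃ k : ℕ, 2⁻¹ ^ (k + 1) * s ≤ x ∧ x ≤ 2⁻¹ ^ k * s := by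
  obtain ⟨k, hk, hk'⟩ := exists_two_pow_mul_near hx hxs hs
  refine ⟨k, ?_, ?_⟩
  · rw [← ENNReal.inv_pow, mul_comm, ← div_eq_mul_inv]
    exact ENNReal.div_le_of_le_mul' hk'
  · rw [← ENNReal.inv_pow, mul_comm, ← div_eq_mul_inv]
    exact (ENNReal.le_div_iff_mul_le (by simp) (by simp)).2 (by rwa [mul_comm])

lemma le_mul_of_forall_lt_ne_top {u c a : ℝ≥0∞} (hc : c ≠ 0) (hc' : c ≠ ∞)
    (h : ∀ b, a < b → b ≠ ∞ → u ≤ c * b) : u ≤ c * a := by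
  rw [← ENNReal.div_le_iff' hc hc']
  refine le_of_forall_gt_imp_ge_of_dense fun b hab => ?_
  rcases eq_or_ne b ∞ with rfl | hb
  · exact le_top
  · exact ENNReal.div_le_of_le_mul' (h b hab hb)

lemma tsum_pow_mul_rpow {b s : ℝ≥0∞} (hb : b ≠ 0) (hs : s ≠ 0) (e : ℝ) :
    ∑' k : ℕ, (b ^ k * s) ^ e = (1 - b ^ e)⁻¹ * s ^ e := by
  have hterm (k : ℕ) : (b ^ k * s) ^ e = (b ^ e) ^ k * s ^ e := by
    rw [ENNReal.mul_rpow_of_ne_zero (pow_ne_zero k hb) hs, ← rpow_natCast_mul, mul_comm (k : ℝ),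
      rpow_mul_natCast]
  simp_rw [hterm, ENNReal.tsum_mul_right, tsum_geometric]

/-- `g` lies in weak `L^r(μ)`, with `A` bounding the `r`-th power of its weak norm. -/
def HasWeakLpBound {X : Type*} [MeasurableSpace X] (μ : Measure X) (r : ℝ) (A : NNReal)
    (g : X → ℝ≥0∞) : Prop :=
  ∀ t : ℝ≥0∞, t ^ r * μ {x | t < g x} ≤ A

namespace HasWeakLpBound

variable {X : Type*} [MeasurableSpace X] {μ : Measure X} {r α : ℝ} {A : NNReal} {g : X → ℝ≥0∞}

lemma measure_lt_le (hg : HasWeakLpBound μ r A g) {t : ℝ≥0∞} (ht : t ≠ 0) (ht' : t ≠ ∞) :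
    μ {x | t < g x} ≤ A * t ^ (-r) := by
  rw [rpow_neg, ← div_eq_mul_inv, ENNReal.le_div_iff_mul_le (by simp [ht, ht']) (by simp [ht, ht']),
    mul_comm]
  exact hg t

lemma measure_eq_top_eq_zero (hg : HasWeakLpBound μ r A g) (hr : 0 < r) : μ {x | g x = ∞} = 0 := by
  by_contra hpos
  obtain ⟨n, hn⟩ := ENNReal.exists_nat_mul_gt hpos (coe_ne_top (r := A))
  refine hn.not_ge ?_
  calc (n : ℝ≥0∞) * μ {x | g x = ∞}
      ≤ ((n : ℝ≥0∞) ^ r⁻¹) ^ r * μ {x | (n : ℝ≥0∞) ^ r⁻¹ < g x} := by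
        rw [rpow_inv_rpow hr.ne']
        refine mul_le_mul_right (measure_mono fun x (hx : g x = ∞) => ?_) _
        simp [hx, rpow_lt_top_iff_of_pos, hr]
    _ ≤ A := hg _

lemma setLIntegral_rpow_shell_le (hg : HasWeakLpBound μ r A g) (hα : 0 ≤ α) {t : ℝ≥0∞}
    (ht : t ≠ 0) (ht' : t ≠ ∞) :
    ∫⁻ x in {x | 2⁻¹ * t ≤ g x ∧ g x ≤ 2 * t}, g x ^ α ∂μ ≤ 2 ^ α * 4 ^ r * A * t ^ (α - r) := by
  have hsub : {x | 2⁻¹ * t ≤ g x ∧ g x ≤ 2 * t} ⊆ {x | 4⁻¹ * t < g x} := fun x hx =>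
    ((ENNReal.mul_lt_mul_iff_left ht ht').2 (ENNReal.inv_lt_inv.2 (by norm_num))).trans_le hx.1
  calc ∫⁻ x in {x | 2⁻¹ * t ≤ g x ∧ g x ≤ 2 * t}, g x ^ α ∂μ
      ≤ (2 * t) ^ α * μ {x | 2⁻¹ * t ≤ g x ∧ g x ≤ 2 * t} :=
        (setLIntegral_mono measurable_const fun x hx => rpow_le_rpow hx.2 hα).trans_eq
          (setLIntegral_const _ _)
    _ ≤ (2 * t) ^ α * (A * (4⁻¹ * t) ^ (-r)) := by
        gcongr
        exact (measure_mono hsub).trans (hg.measure_lt_le (by simp [ht]) (by finiteness))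
    _ = 2 ^ α * 4 ^ r * A * t ^ (α - r) := by
        rw [mul_rpow_of_nonneg _ _ hα, mul_rpow_of_ne_zero (by simp) ht, sub_eq_add_neg,
          rpow_add _ _ ht ht', ENNReal.inv_rpow, ← rpow_neg, neg_neg]
        ring

lemma setLIntegral_rpow_le_of_forall_mem_shell (hg : HasWeakLpBound μ r A g)
    (hgm : Measurable g) (hr : 0 < r) (hα : 0 < α)
    {b s : ℝ≥0∞} (hb : b ≠ 0) (hb' : b ≠ ∞) (hs : s ≠ 0) (hs' : s ≠ ∞) {S : Set X}
    (hS : ∀ x ∈ S, g x ≠ 0 → g x ≠ ∞ →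
      ∃ k : ℕ, 2⁻¹ * (b ^ k * s) ≤ g x ∧ g x ≤ 2 * (b ^ k * s)) :
    ∫⁻ x in S, g x ^ α ∂μ ≤ 2 ^ α * 4 ^ r * A * (1 - b ^ (α - r))⁻¹ * s ^ (α - r) := by
  let shell (k : ℕ) : Set X := {x | 2⁻¹ * (b ^ k * s) ≤ g x ∧ g x ≤ 2 * (b ^ k * s)}
  have hcover : S ⊆ {x | g x = 0} ∪ ({x | g x = ∞} ∪ ⋃ k, shell k) := by
    intro x hx
    by_cases h₀ : g x = 0
    · exact Or.inl h₀
    by_cases h₁ : g x = ∞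
    · exact Or.inr (Or.inl h₁)
    · exact Or.inr (Or.inr (Set.mem_iUnion.2 (hS x hx h₀ h₁)))
  have hzero : ∫⁻ x in {x | g x = 0}, g x ^ α ∂μ = 0 :=
    (setLIntegral_eq_zero_iff (measurableSet_eq_fun hgm measurable_const) (hgm.pow_const α)).2
      (.of_forall fun x (hx : g x = 0) => by simp [hx, hα])
  calc ∫⁻ x in S, g x ^ α ∂μ
      ≤ ∫⁻ x in {x | g x = 0}, g x ^ α ∂μ +
          (∫⁻ x in {x | g x = ∞}, g x ^ α ∂μ + ∫⁻ x in ⋃ k, shell k, g x ^ α ∂μ) :=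
        (lintegral_mono_set hcover).trans <| (lintegral_union_le _ _ _).trans <|
          add_le_add_right (lintegral_union_le _ _ _) _
    _ = ∫⁻ x in ⋃ k, shell k, g x ^ α ∂μ := by
        rw [hzero, setLIntegral_measure_zero _ _ (hg.measure_eq_top_eq_zero hr), zero_add, zero_add]
    _ ≤ ∑' k, ∫⁻ x in shell k, g x ^ α ∂μ := lintegral_iUnion_le _ _
    _ ≤ ∑' k, 2 ^ α * 4 ^ r * A * (b ^ k * s) ^ (α - r) :=
        ENNReal.tsum_le_tsum fun k => hg.setLIntegral_rpow_shell_le hα.le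
          (mul_ne_zero (pow_ne_zero k hb) hs) (mul_ne_top (pow_ne_top hb') hs')
    _ = 2 ^ α * 4 ^ r * A * (1 - b ^ (α - r))⁻¹ * s ^ (α - r) := by
        rw [ENNReal.tsum_mul_left, tsum_pow_mul_rpow hb hs]
        ring

lemma exists_setLIntegral_lt_rpow_le (μ : Measure X) (A : NNReal) (hα : 0 < α) (hαr : α < r) :
    ∃ C : ℝ≥0∞, C ≠ ∞ ∧ ∀ g, Measurable g → HasWeakLpBound μ r A g → ∀ s, s ≠ 0 → s ≠ ∞ →
      ∫⁻ x in {x | s < g x}, g x ^ α ∂μ ≤ C * s ^ (α - r) := by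
  have hratio : (2 : ℝ≥0∞) ^ (α - r) < 1 :=
    rpow_lt_one_of_one_lt_of_neg one_lt_two (sub_neg.2 hαr)
  have hsum : (1 - (2 : ℝ≥0∞) ^ (α - r))⁻¹ ≠ ∞ := inv_ne_top.2 (tsub_pos_of_lt hratio).ne'
  refine ⟨2 ^ α * 4 ^ r * A * (1 - 2 ^ (α - r))⁻¹, by finiteness, fun g hgm hg s hs hs' => ?_⟩
  refine hg.setLIntegral_rpow_le_of_forall_mem_shell hgm (hα.trans hαr) hα (by simp) (by simp)
    hs hs' fun x hx _ hx' => ?_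
  obtain ⟨k, hk, hk'⟩ := exists_two_pow_mul_near hs (le_of_lt hx) hx'
  exact ⟨k, (mul_le_of_le_one_left' (by simp)).trans hk, hk'.trans_eq (by ring)⟩

lemma exists_setLIntegral_le_rpow_le (μ : Measure X) (A : NNReal) (hr : 0 < r) (hrα : r < α) :
    ∃ C : ℝ≥0∞, C ≠ ∞ ∧ ∀ g, Measurable g → HasWeakLpBound μ r A g → ∀ s, s ≠ 0 → s ≠ ∞ →
      ∫⁻ x in {x | g x ≤ s}, g x ^ α ∂μ ≤ C * s ^ (α - r) := by
  have hratio : (2⁻¹ : ℝ≥0∞) ^ (α - r) < 1 :=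
    rpow_lt_one (ENNReal.inv_lt_one.2 one_lt_two) (sub_pos.2 hrα)
  have hsum : (1 - (2⁻¹ : ℝ≥0∞) ^ (α - r))⁻¹ ≠ ∞ := inv_ne_top.2 (tsub_pos_of_lt hratio).ne'
  have := hr.trans hrα
  refine ⟨2 ^ α * 4 ^ r * A * (1 - 2⁻¹ ^ (α - r))⁻¹, by finiteness, fun g hgm hg s hs hs' => ?_⟩
  refine hg.setLIntegral_rpow_le_of_forall_mem_shell hgm hr (hr.trans hrα) (by simp) (by simp)
    hs hs' fun x hx hx₀ _ => ?_
  obtain ⟨k, hk, hk'⟩ := exists_inv_two_pow_mul_near hx₀ hx hs'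
  exact ⟨k, hk.trans_eq' (by ring), hk'.trans (le_mul_of_one_le_left' (by simp))⟩

variable {p q : ℝ}

lemma exists_setLIntegral_le_mul_le (μ : Measure X) (A : NNReal) (hp : 1 < p) (hr : 0 < r)
    (hq : 0 < q) (hpqr : q⁻¹ = p⁻¹ + r⁻¹ - 1) :
    ∃ C : ℝ≥0∞, C ≠ ∞ ∧ ∀ f g, Measurable f → Measurable g → ∫⁻ x, f x ^ p ∂μ ≤ 1 →
      HasWeakLpBound μ r A g → ∀ s, s ≠ 0 → s ≠ ∞ →
      ∫⁻ x in {x | g x ≤ s}, f x * g x ∂μ ≤ C * s ^ (r / q) := by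
  obtain ⟨p', hpp'⟩ : ∃ p', p.HolderConjugate p' := ⟨_, .conjExponent hp⟩
  have hp' : 0 < p' := hpp'.symm.pos
  have hinv : p'⁻¹ = r⁻¹ - q⁻¹ := by linarith [hpp'.inv_add_inv_eq_one]
  have hrp' : r < p' := by
    rw [← inv_lt_inv₀ hp' hr]
    linarith [inv_pos.2 hq]
  obtain ⟨C, hC, hle⟩ := exists_setLIntegral_le_rpow_le μ A hr hrp'
  refine ⟨C ^ p'⁻¹, by finiteness, fun f g hf hgm hf₁ hg s hs hs' => ?_⟩
  calc ∫⁻ x in {x | g x ≤ s}, f x * g x ∂μ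
      ≤ (∫⁻ x in {x | g x ≤ s}, f x ^ p ∂μ) ^ (1 / p) *
          (∫⁻ x in {x | g x ≤ s}, g x ^ p' ∂μ) ^ (1 / p') :=
        lintegral_mul_le_Lp_mul_Lq _ hpp' hf.aemeasurable hgm.aemeasurable
    _ ≤ 1 * (C * s ^ (p' - r)) ^ (1 / p') := by
        gcongr
        · exact rpow_le_one ((setLIntegral_le_lintegral _ _).trans hf₁) (by positivity)
        · exact hle g hgm hg s hs hs'
    _ = C ^ p'⁻¹ * s ^ (r / q) := by
        have hexp : (p' - r) * p'⁻¹ = r / q := by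
          rw [sub_mul, mul_inv_cancel₀ hp'.ne', hinv, mul_sub, mul_inv_cancel₀ hr.ne']
          ring
        rw [one_mul, one_div, mul_rpow_of_nonneg _ _ (inv_pos.2 hp').le, ← rpow_mul, hexp]

lemma exists_setLIntegral_lt_inter_le_mul_le (μ : Measure X) (A : NNReal) (hr : 1 < r)
    (hpqr : q⁻¹ = p⁻¹ + r⁻¹ - 1) :
    ∃ C : ℝ≥0∞, C ≠ ∞ ∧ ∀ f g : X → ℝ≥0∞, Measurable g → HasWeakLpBound μ r A g →
      ∀ s, s ≠ 0 → s ≠ ∞ →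
      ∫⁻ x in {x | s < g x ∧ f x ≤ s ^ (r / p)}, f x * g x ∂μ ≤ C * s ^ (r / q) := by
  obtain ⟨C, hC, hle⟩ := exists_setLIntegral_lt_rpow_le μ A one_pos hr
  refine ⟨C, hC, fun f g hgm hg s hs hs' => ?_⟩
  calc ∫⁻ x in {x | s < g x ∧ f x ≤ s ^ (r / p)}, f x * g x ∂μ
      ≤ ∫⁻ x in {x | s < g x ∧ f x ≤ s ^ (r / p)}, s ^ (r / p) * g x ^ (1 : ℝ) ∂μ :=
        setLIntegral_mono (by fun_prop) fun x hx => by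
          rw [rpow_one]
          gcongr
          exact hx.2
    _ ≤ ∫⁻ x in {x | s < g x}, s ^ (r / p) * g x ^ (1 : ℝ) ∂μ :=
        lintegral_mono_set fun x hx => hx.1
    _ = s ^ (r / p) * ∫⁻ x in {x | s < g x}, g x ^ (1 : ℝ) ∂μ :=
        lintegral_const_mul _ (by fun_prop)
    _ ≤ s ^ (r / p) * (C * s ^ (1 - r)) := by
        gcongr
        exact hle g hgm hg s hs hs'
    _ = C * s ^ (r / q) := by
        have hexp : r / q = r / p + (1 - r) := by
          rw [div_eq_mul_inv, hpqr]
          field_simp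
          ring
        rw [hexp, rpow_add _ _ hs hs']
        ring

lemma setLIntegral_lt_inter_lt_mul_le {f g : X → ℝ≥0∞} (hf : Measurable f) (hg : Measurable g)
    (hp : 0 < p) (hr : 0 ≤ r) (hq : 1 ≤ q) {s : ℝ≥0∞} (hs : s ≠ 0) (hs' : s ≠ ∞) :
    ∫⁻ x in {x | s < g x ∧ s ^ (r / p) < f x}, f x * g x ∂μ ≤
      (∫⁻ x, f x * g x * min (g x ^ r) (f x ^ p) ^ (1 - q⁻¹) ∂μ) / s ^ (r * (1 - q⁻¹)) := by
  have hq' : 0 ≤ 1 - q⁻¹ := sub_nonneg.2 (inv_le_one_of_one_le₀ hq)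
  have hfg : Measurable fun x => f x * g x := hf.mul hg
  rw [ENNReal.le_div_iff_mul_le (by simp [hs, hs']) (by simp [hs, hs']),
    ← lintegral_mul_const _ hfg]
  refine (setLIntegral_mono (by fun_prop) fun x hx => ?_).trans (setLIntegral_le_lintegral _ _)
  have hmin : s ^ r ≤ min (g x ^ r) (f x ^ p) := by
    refine le_min (rpow_le_rpow hx.1.le hr) ?_
    calc s ^ r = (s ^ (r / p)) ^ p := by rw [← rpow_mul, div_mul_cancel₀ _ hp.ne']
      _ ≤ f x ^ p := rpow_le_rpow hx.2.le hp.le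
  rw [rpow_mul]
  gcongr

lemma exists_lintegral_mul_le_add_div (μ : Measure X) (A : NNReal) (hp : 1 < p) (hr : 1 < r)
    (hq : 1 ≤ q) (hpqr : q⁻¹ = p⁻¹ + r⁻¹ - 1) :
    ∃ C : ℝ≥0∞, C ≠ ∞ ∧ ∀ f g, Measurable f → Measurable g → ∫⁻ x, f x ^ p ∂μ ≤ 1 →
      HasWeakLpBound μ r A g → ∀ s, s ≠ 0 → s ≠ ∞ →
      ∫⁻ x, f x * g x ∂μ ≤ C * s ^ (r / q) +
        (∫⁻ x, f x * g x * min (g x ^ r) (f x ^ p) ^ (1 - q⁻¹) ∂μ) / s ^ (r * (1 - q⁻¹)) := by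
  have hp₀ : 0 < p := one_pos.trans hp
  have hr₀ : 0 < r := one_pos.trans hr
  have hq₀ : 0 < q := one_pos.trans_le hq
  obtain ⟨C₁, hC₁, hle₁⟩ := exists_setLIntegral_le_mul_le μ A hp hr₀ hq₀ hpqr
  obtain ⟨C₂, hC₂, hle₂⟩ := exists_setLIntegral_lt_inter_le_mul_le μ A hr hpqr
  refine ⟨C₁ + C₂, by finiteness, fun f g hf hg hf₁ hgw s hs hs' => ?_⟩
  have hcover : (Set.univ : Set X) ⊆ {x | g x ≤ s} ∪
      ({x | s < g x ∧ f x ≤ s ^ (r / p)} ∪ {x | s < g x ∧ s ^ (r / p) < f x}) := fun x _ => by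
    simp only [Set.mem_union, Set.mem_ofPred_eq]
    grind
  rw [← setLIntegral_univ, add_mul, add_assoc]
  exact (lintegral_mono_set hcover).trans <| (lintegral_union_le _ _ _).trans <|
    add_le_add (hle₁ f g hf hg hf₁ hgw s hs hs') <| (lintegral_union_le _ _ _).trans <|
    add_le_add (hle₂ f g hg hgw s hs hs') <|
    setLIntegral_lt_inter_lt_mul_le hf hg hp₀ hr₀.le hq hs hs'

lemma exists_lintegral_mul_rpow_le (μ : Measure X) (A : NNReal) (hp : 1 < p) (hr : 1 < r)
    (hq : 1 ≤ q) (hpqr : q⁻¹ = p⁻¹ + r⁻¹ - 1) :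
    ∃ C : ℝ≥0∞, C ≠ ∞ ∧ ∀ f g, Measurable f → Measurable g → ∫⁻ x, f x ^ p ∂μ ≤ 1 →
      HasWeakLpBound μ r A g →
      (∫⁻ x, f x * g x ∂μ) ^ q ≤
        C * ∫⁻ x, f x * g x * min (g x ^ r) (f x ^ p) ^ (1 - q⁻¹) ∂μ := by
  have hr₀ : 0 < r := one_pos.trans hr
  have hq₀ : 0 < q := one_pos.trans_le hq
  obtain ⟨C, hC, hle⟩ := exists_lintegral_mul_le_add_div μ A hp hr hq hpqr
  refine ⟨(C + 1) ^ q, by finiteness, fun f g hf hg hf₁ hgw => ?_⟩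
  set G := ∫⁻ x, f x * g x * min (g x ^ r) (f x ^ p) ^ (1 - q⁻¹) ∂μ
  refine le_mul_of_forall_lt_ne_top (by simp [hq₀.le]) (by finiteness) fun b hGb hb => ?_
  have hb₀ : b ≠ 0 := (bot_le.trans_lt hGb).ne'
  calc (∫⁻ x, f x * g x ∂μ) ^ q
      ≤ (C * (b ^ r⁻¹) ^ (r / q) + G / (b ^ r⁻¹) ^ (r * (1 - q⁻¹))) ^ q := by
        gcongr
        exact hle f g hf hg hf₁ hgw _ (by simp [hb₀, hb]) (by finiteness)
    _ ≤ (C * b ^ q⁻¹ + b / b ^ (1 - q⁻¹)) ^ q := by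
        rw [← rpow_mul, ← rpow_mul, inv_mul_cancel_left₀ hr₀.ne', ← mul_div_assoc,
          inv_mul_cancel₀ hr₀.ne', one_div]
        gcongr
    _ = ((C + 1) * b ^ q⁻¹) ^ q := by
        have hdiv : b / b ^ (1 - q⁻¹) = b ^ q⁻¹ := by
          conv_lhs => rw [← rpow_one b, ← rpow_mul, ← rpow_sub _ _ hb₀ hb]
          simp
        rw [hdiv, add_mul, one_mul]
    _ = (C + 1) ^ q * b := by rw [mul_rpow_of_nonneg _ _ hq₀.le, rpow_inv_rpow hq₀.ne']

lemma exists_setLIntegral_le_mul_min_rpow_le (μ : Measure X) (A : NNReal) (hr : 0 < r)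
    (hq : 1 ≤ q) (hrq : r < q) (hp : p ≠ 0) (hpqr : q⁻¹ = p⁻¹ + r⁻¹ - 1) :
    ∃ C : ℝ≥0∞, C ≠ ∞ ∧ ∀ g, Measurable g → HasWeakLpBound μ r A g → ∀ v, v ≠ 0 → v ≠ ∞ →
      ∫⁻ x in {x | g x ≤ v ^ (p / r)}, g x * min (g x ^ r) (v ^ p) ^ (1 - q⁻¹) ∂μ ≤
        C * v ^ (p - 1) := by
  have hrq' : r * q⁻¹ < 1 := (mul_inv_lt_iff₀ (hr.trans hrq)).2 (by linarith)
  have hq' : 0 ≤ 1 - q⁻¹ := sub_nonneg.2 (inv_le_one_of_one_le₀ hq)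
  have hrα : r < 1 + r * (1 - q⁻¹) := by linarith
  obtain ⟨C, hC, hle⟩ := exists_setLIntegral_le_rpow_le μ A hr hrα
  refine ⟨C, hC, fun g hg hgw v hv hv' => ?_⟩
  calc ∫⁻ x in {x | g x ≤ v ^ (p / r)}, g x * min (g x ^ r) (v ^ p) ^ (1 - q⁻¹) ∂μ
      ≤ ∫⁻ x in {x | g x ≤ v ^ (p / r)}, g x ^ (1 + r * (1 - q⁻¹)) ∂μ := by
        refine lintegral_mono fun x => ?_
        rw [rpow_add_of_nonneg _ _ zero_le_one (by positivity), rpow_one, rpow_mul]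
        gcongr
        exact min_le_left _ _
    _ ≤ C * (v ^ (p / r)) ^ (1 + r * (1 - q⁻¹) - r) :=
        hle g hg hgw _ (by simp [hv, hv']) (by finiteness)
    _ = C * v ^ (p - 1) := by
        have hexp : p / r * (1 + r * (1 - q⁻¹) - r) = p - 1 := by
          rw [hpqr]
          field_simp
          ring
        rw [← rpow_mul, hexp]

lemma exists_setLIntegral_lt_mul_min_rpow_le (μ : Measure X) (A : NNReal) (hr : 1 < r)
    (hq : 1 ≤ q) (hp : p ≠ 0) (hpqr : q⁻¹ = p⁻¹ + r⁻¹ - 1) :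
    ∃ C : ℝ≥0∞, C ≠ ∞ ∧ ∀ g, Measurable g → HasWeakLpBound μ r A g → ∀ v, v ≠ 0 → v ≠ ∞ →
      ∫⁻ x in {x | v ^ (p / r) < g x}, g x * min (g x ^ r) (v ^ p) ^ (1 - q⁻¹) ∂μ ≤
        C * v ^ (p - 1) := by
  have hr₀ : r ≠ 0 := (one_pos.trans hr).ne'
  have hq' : 0 ≤ 1 - q⁻¹ := sub_nonneg.2 (inv_le_one_of_one_le₀ hq)
  obtain ⟨C, hC, hle⟩ := exists_setLIntegral_lt_rpow_le μ A one_pos hr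
  refine ⟨C, hC, fun g hg hgw v hv hv' => ?_⟩
  calc ∫⁻ x in {x | v ^ (p / r) < g x}, g x * min (g x ^ r) (v ^ p) ^ (1 - q⁻¹) ∂μ
      ≤ ∫⁻ x in {x | v ^ (p / r) < g x}, g x ^ (1 : ℝ) * (v ^ p) ^ (1 - q⁻¹) ∂μ := by
        refine lintegral_mono fun x => ?_
        rw [rpow_one]
        gcongr
        exact min_le_right _ _
    _ = (∫⁻ x in {x | v ^ (p / r) < g x}, g x ^ (1 : ℝ) ∂μ) * v ^ (p * (1 - q⁻¹)) := by
        rw [lintegral_mul_const _ (by fun_prop), rpow_mul]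
    _ ≤ C * (v ^ (p / r)) ^ (1 - r) * v ^ (p * (1 - q⁻¹)) := by
        gcongr
        exact hle g hg hgw _ (by simp [hv, hv']) (by finiteness)
    _ = C * v ^ (p - 1) := by
        have hexp : p / r * (1 - r) + p * (1 - q⁻¹) = p - 1 := by
          rw [hpqr]
          field_simp
          ring
        rw [mul_assoc, ← rpow_mul, ← rpow_add _ _ hv hv', hexp]

lemma exists_lintegral_mul_min_rpow_le (μ : Measure X) (A : NNReal) (hp : 1 < p) (hr : 1 < r)
    (hrq : r < q) (hpqr : q⁻¹ = p⁻¹ + r⁻¹ - 1) :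
    ∃ C : ℝ≥0∞, C ≠ ∞ ∧ ∀ g, Measurable g → HasWeakLpBound μ r A g → ∀ v, v ≠ ∞ →
      ∫⁻ x, g x * min (g x ^ r) (v ^ p) ^ (1 - q⁻¹) ∂μ ≤ C * v ^ (p - 1) := by
  have hp₀ : 0 < p := one_pos.trans hp
  have hq : 1 < q := hr.trans hrq
  obtain ⟨C₁, hC₁, hle₁⟩ :=
    exists_setLIntegral_le_mul_min_rpow_le μ A (one_pos.trans hr) hq.le hrq hp₀.ne' hpqr
  obtain ⟨C₂, hC₂, hle₂⟩ := exists_setLIntegral_lt_mul_min_rpow_le μ A hr hq.le hp₀.ne' hpqr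
  refine ⟨C₁ + C₂, by finiteness, fun g hg hgw v hv => ?_⟩
  rcases eq_or_ne v 0 with rfl | hv₀
  · have hq' : 0 < 1 - q⁻¹ := sub_pos.2 (inv_lt_one_of_one_lt₀ hq)
    simp [hp₀, hq']
  have hcover : (Set.univ : Set X) ⊆ {x | g x ≤ v ^ (p / r)} ∪ {x | v ^ (p / r) < g x} :=
    fun x _ => le_or_gt (g x) _
  rw [← setLIntegral_univ, add_mul]
  exact (lintegral_mono_set hcover).trans <| (lintegral_union_le _ _ _).trans <|
    add_le_add (hle₁ g hg hgw v hv₀ hv) (hle₂ g hg hgw v hv₀ hv)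

end HasWeakLpBound

section WeakYoung

variable {X Y : Type*} [MeasurableSpace X] [MeasurableSpace Y] {μ : Measure X} {ν : Measure Y}
  [SFinite μ] [SFinite ν] {k : X → Y → ℝ≥0∞} {p q r : ℝ} {A : NNReal}

lemma exists_lintegral_rpow_lintegral_mul_le (hk : Measurable (Function.uncurry k))
    (hkx : ∀ x, HasWeakLpBound ν r A (k x)) (hky : ∀ y, HasWeakLpBound μ r A (k · y))
    (hp : 1 < p) (hr : 1 < r) (hq : 0 < q) (hpqr : q⁻¹ = p⁻¹ + r⁻¹ - 1) :
    ∃ C : ℝ≥0∞, C ≠ ∞ ∧ ∀ f, Measurable f → ∫⁻ y, f y ^ p ∂ν ≤ 1 →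
      ∫⁻ x, (∫⁻ y, f y * k x y ∂ν) ^ q ∂μ ≤ C := by
  have hrq : r < q := by
    rw [← inv_lt_inv₀ hq (one_pos.trans hr)]
    linarith [inv_lt_one_of_one_lt₀ hp]
  obtain ⟨C₁, hC₁, hle₁⟩ :=
    HasWeakLpBound.exists_lintegral_mul_rpow_le ν A hp hr (hr.trans hrq).le hpqr
  obtain ⟨C₂, hC₂, hle₂⟩ := HasWeakLpBound.exists_lintegral_mul_min_rpow_le μ A hp hr hrq hpqr
  refine ⟨C₁ * C₂, by finiteness, fun f hf hf₁ => ?_⟩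
  have hf_lt : ∀ᵐ y ∂ν, f y < ∞ := by
    filter_upwards [ae_lt_top (hf.pow_const p) (hf₁.trans_lt one_lt_top).ne] with y hy
    exact (rpow_lt_top_iff_of_pos (one_pos.trans hp)).1 hy
  have hG : Measurable (Function.uncurry fun x y =>
      f y * k x y * min (k x y ^ r) (f y ^ p) ^ (1 - q⁻¹)) := by
    have hfy : Measurable fun z : X × Y => f z.2 := hf.comp measurable_snd
    exact (hfy.mul hk).mul (((hk.pow_const r).min (hfy.pow_const p)).pow_const _)
  calc ∫⁻ x, (∫⁻ y, f y * k x y ∂ν) ^ q ∂μ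
      ≤ ∫⁻ x, C₁ * ∫⁻ y, f y * k x y * min (k x y ^ r) (f y ^ p) ^ (1 - q⁻¹) ∂ν ∂μ :=
        lintegral_mono fun x => hle₁ f (k x) hf hk.of_uncurry_left hf₁ (hkx x)
    _ = C₁ * ∫⁻ y, ∫⁻ x, f y * k x y * min (k x y ^ r) (f y ^ p) ^ (1 - q⁻¹) ∂μ ∂ν := by
        rw [lintegral_const_mul _ hG.lintegral_prod_right, lintegral_lintegral_swap hG.aemeasurable]
    _ = C₁ * ∫⁻ y, f y * ∫⁻ x, k x y * min (k x y ^ r) (f y ^ p) ^ (1 - q⁻¹) ∂μ ∂ν := by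
        have hky' (y : Y) :
            Measurable fun x => k x y * min (k x y ^ r) (f y ^ p) ^ (1 - q⁻¹) := by
          have : Measurable fun x => k x y := hk.of_uncurry_right
          fun_prop
        simp_rw [mul_assoc (f _), lintegral_const_mul _ (hky' _)]
    _ ≤ C₁ * ∫⁻ y, C₂ * f y ^ p ∂ν := by
        gcongr C₁ * ?_
        refine lintegral_mono_ae ?_
        filter_upwards [hf_lt] with y hy
        calc f y * _ ≤ f y * (C₂ * f y ^ (p - 1)) := by
              gcongr
              exact hle₂ _ hk.of_uncurry_right (hky y) _ hy.ne
          _ = C₂ * f y ^ p := by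
              rw [mul_left_comm]
              nth_rw 1 [← rpow_one (f y)]
              rw [← rpow_add_of_nonneg _ _ zero_le_one (by linarith), add_sub_cancel]
    _ ≤ C₁ * C₂ := by
        rw [lintegral_const_mul _ (hf.pow_const p)]
        gcongr
        exact mul_le_of_le_one_right' hf₁

lemma exists_lpNorm_lintegral_mul_le (hk : Measurable (Function.uncurry k))
    (hkx : ∀ x, HasWeakLpBound ν r A (k x)) (hky : ∀ y, HasWeakLpBound μ r A (k · y))
    (hp : 1 < p) (hr : 1 < r) (hq : 0 < q) (hpqr : q⁻¹ = p⁻¹ + r⁻¹ - 1) :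
    ∃ C : ℝ≥0∞, C ≠ ∞ ∧ ∀ f, Measurable f →
      lpNorm μ q (fun x => ∫⁻ y, f y * k x y ∂ν) ≤ C * lpNorm ν p f := by
  obtain ⟨C, hC, hle⟩ := exists_lintegral_rpow_lintegral_mul_le hk hkx hky hp hr hq hpqr
  refine ⟨(C + 1) ^ q⁻¹, by finiteness, fun f hf => ?_⟩
  refine le_mul_of_forall_lt_ne_top (by simp [hq.le]) (by finiteness) fun b hfb hb => ?_
  have hb₀ : b ≠ 0 := (bot_le.trans_lt hfb).ne'
  have hp₀ : 0 < p := one_pos.trans hp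
  have hfb₁ : ∫⁻ y, (b⁻¹ * f y) ^ p ∂ν ≤ 1 := by
    have hlt : ∫⁻ y, f y ^ p ∂ν ≤ b ^ p := by
      rw [← rpow_inv_le_iff hp₀, ← one_div]
      exact hfb.le
    simp_rw [mul_rpow_of_nonneg _ _ hp₀.le]
    rw [lintegral_const_mul _ (hf.pow_const p), ENNReal.inv_rpow, mul_comm, ← div_eq_mul_inv]
    exact ENNReal.div_le_of_le_mul (by rwa [one_mul])
  have hscale (x : X) :
      ∫⁻ y, f y * k x y ∂ν = b * ∫⁻ y, b⁻¹ * f y * k x y ∂ν := by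
    rw [← lintegral_const_mul' _ _ hb]
    simp_rw [← mul_assoc, ENNReal.mul_inv_cancel hb₀ hb, one_mul]
  calc lpNorm μ q (fun x => ∫⁻ y, f y * k x y ∂ν)
      = (b ^ q * ∫⁻ x, (∫⁻ y, b⁻¹ * f y * k x y ∂ν) ^ q ∂μ) ^ q⁻¹ := by
        unfold _root_.lpNorm
        simp_rw [hscale, mul_rpow_of_nonneg _ _ hq.le]
        rw [lintegral_const_mul' _ _ (by finiteness), one_div]
    _ ≤ (b ^ q * (C + 1)) ^ q⁻¹ := by
        gcongr
        exact (hle _ (hf.const_mul _) hfb₁).trans le_self_add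
    _ = (C + 1) ^ q⁻¹ * b := by
        rw [mul_rpow_of_nonneg _ _ (inv_pos.2 hq).le, rpow_rpow_inv hq.ne', mul_comm]

end WeakYoung

/-- The upper half of Ahlfors regularity: every `d`-ball of radius `r` has measure at most
`A * r ^ η`. No axiom of a quasi-metric is imposed on `d`; for a non-symmetric `d` the balls are
taken in the second variable. -/
def IsUpperAhlfors {X : Type*} [MeasurableSpace X] (d : X → X → ℝ) (μ : Measure X)
    (η A : ℝ) : Prop :=
  ∀ x : X, ∀ r : ℝ, 0 < r → μ {y | d x y < r} ≤ ENNReal.ofReal (A * r ^ η)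

section FracInt

variable {X : Type*} [MeasurableSpace X] {d : X → X → ℝ} {μ : Measure X} {η A : ℝ}

lemma IsUpperAhlfors.sigmaFinite (h : IsUpperAhlfors d μ η A) : SigmaFinite μ := by
  rcases isEmpty_or_nonempty X with _ | ⟨⟨x₀⟩⟩
  · rw [Measure.eq_zero_of_isEmpty μ]
    infer_instance
  · refine ⟨⟨⟨fun n : ℕ => {y | d x₀ y < n + 1}, fun _ => trivial, fun n => ?_, ?_⟩⟩⟩
    · exact (h x₀ _ n.cast_add_one_pos).trans_lt ofReal_lt_top
    · refine Set.eq_univ_of_forall fun y => Set.mem_iUnion.2 ?_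
      obtain ⟨n, hn⟩ := exists_nat_gt (d x₀ y)
      exact ⟨n, hn.trans (lt_add_one _)⟩

lemma IsUpperAhlfors.hasWeakLpBound_rpow_neg (h : IsUpperAhlfors d μ η A) (hη : 0 < η) {θ : ℝ}
    (hθ : 0 < θ) (x : X) :
    HasWeakLpBound μ (η / θ) A.toNNReal fun y => ENNReal.ofReal (d x y) ^ (-θ) := by
  intro t
  rcases eq_or_ne t 0 with rfl | ht
  · simp [zero_rpow_of_pos (div_pos hη hθ)]
  rcases eq_or_ne t ∞ with rfl | ht'
  · simp
  have hτ : 0 < t.toReal := toReal_pos ht ht'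
  have hsub : {y | t < ENNReal.ofReal (d x y) ^ (-θ)} ⊆ {y | d x y < t.toReal ^ (-θ⁻¹)} := by
    intro y (hy : t < _)
    by_contra hd
    refine hy.not_ge ?_
    calc ENNReal.ofReal (d x y) ^ (-θ)
        ≤ ENNReal.ofReal (t.toReal ^ (-θ⁻¹)) ^ (-θ) := by
          rw [rpow_neg, rpow_neg]
          gcongr
          exact not_lt.1 hd
      _ = t := by
          rw [← ofReal_rpow_of_pos hτ, ofReal_toReal ht', ← rpow_mul, neg_mul_neg,
            inv_mul_cancel₀ hθ.ne', rpow_one]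
  calc t ^ (η / θ) * μ {y | t < ENNReal.ofReal (d x y) ^ (-θ)}
      ≤ t ^ (η / θ) * ENNReal.ofReal (A * (t.toReal ^ (-θ⁻¹)) ^ η) := by
        gcongr
        exact (measure_mono hsub).trans (h x _ (by positivity))
    _ = t ^ (η / θ) * (ENNReal.ofReal A * t ^ (-(η / θ))) := by
        rw [← Real.rpow_mul hτ.le, ofReal_mul' (by positivity), ← ofReal_rpow_of_pos hτ,
          ofReal_toReal ht', neg_mul, inv_mul_eq_div]
    _ = A.toNNReal := by
        rw [mul_left_comm, ← rpow_add _ _ ht ht', add_neg_cancel, rpow_zero, mul_one]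
        rfl

lemma lpNorm_mul_le {f g : X → ℝ≥0∞} (hf : Measurable f) (hg : Measurable g) {p q r : ℝ}
    (hp : 0 < p) (hq : 0 < q) (hr : 0 < r) (hpqr : 1 / p = 1 / q + 1 / r) :
    lpNorm μ p (fun x => f x * g x) ≤ lpNorm μ q f * lpNorm μ r g :=
  ENNReal.lintegral_Lp_mul_le_Lq_mul_Lr hp
    ((one_div_lt_one_div hq hp).1 (by linarith [one_div_pos.2 hr])) hpqr μ
    hf.aemeasurable hg.aemeasurable

lemma measurable_fracInt [SFinite μ] (hd_meas : Measurable fun z : X × X => d z.1 z.2) (β η : ℝ)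
    {f : X → ℝ≥0∞} (hf : Measurable f) : Measurable (fracInt d μ β η f) := by
  have hker : Measurable fun z : X × X => f z.2 * ENNReal.ofReal (d z.1 z.2) ^ (β - η) := by
    fun_prop
  exact hker.lintegral_prod_right'

lemma exists_lpNorm_fracInt_le (hd_meas : Measurable fun z : X × X => d z.1 z.2)
    (hd : IsUpperAhlfors d μ η A) (hd' : IsUpperAhlfors (flip d) μ η A) {β p q : ℝ}
    (hβ : 0 < β) (hβη : β < η) (hp : 1 < p) (hq : 0 < q) (hpq : 1 / q = 1 / p - β / η) :
    ∃ C : ℝ≥0∞, C ≠ ∞ ∧ ∀ f, Measurable f →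
      lpNorm μ q (fracInt d μ β η f) ≤ C * lpNorm μ p f := by
  have := hd.sigmaFinite
  have hη : 0 < η := hβ.trans hβη
  have hθ : 0 < η - β := sub_pos.2 hβη
  have hr : 1 < η / (η - β) := (one_lt_div hθ).2 (by linarith)
  have hpqr : q⁻¹ = p⁻¹ + (η / (η - β))⁻¹ - 1 := by
    rw [inv_div, sub_div, div_self hη.ne', ← one_div, hpq]
    ring
  have hk : Measurable (Function.uncurry fun x y => ENNReal.ofReal (d x y) ^ (-(η - β))) := by
    unfold Function.uncurry
    fun_prop
  obtain ⟨C, hC, hle⟩ := exists_lpNorm_lintegral_mul_le hk (hd.hasWeakLpBound_rpow_neg hη hθ)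
    (hd'.hasWeakLpBound_rpow_neg hη hθ) hp hr hq hpqr
  simp only [neg_sub] at hle
  exact ⟨C, hC, hle⟩

end FracInt

theorem statement3_general {X : Type*} [MeasurableSpace X] {d : X → X → ℝ}
    (hd_meas : Measurable fun z : X × X => d z.1 z.2) {μ : Measure X} {η A : ℝ}
    (hd : IsUpperAhlfors d μ η A) (hd' : IsUpperAhlfors (flip d) μ η A) {β₁ β₂ p₁ p₂ p₃ : ℝ}
    (hβ₁ : 0 < β₁) (hβ₁η : β₁ < η) (hβ₂ : 0 < β₂) (hβ₂η : β₂ < η)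
    (hp₁l : β₁ / η < 1 / p₁) (hp₁u : 1 / p₁ < 1) (hp₂ : 0 < 1 / p₂)
    (hsum_l : (β₁ + β₂) / η < 1 / p₁ + 1 / p₂) (hsum_u : 1 / p₁ + 1 / p₂ < 1 + β₁ / η)
    (hp₃ : 1 / p₃ = 1 / p₁ + 1 / p₂ - (β₁ + β₂) / η) :
    ∃ C : ℝ, 0 < C ∧ ∀ f g : X → ℝ≥0∞, Measurable f → Measurable g →
      lpNorm μ p₃ (fracInt d μ β₂ η (fun x => g x * fracInt d μ β₁ η f x)) ≤
        ENNReal.ofReal C * lpNorm μ p₁ f * lpNorm μ p₂ g := by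
  have := hd.sigmaFinite
  rw [add_div] at hsum_l hp₃
  have hσ₁ : 0 < β₁ / η := div_pos hβ₁ (hβ₁.trans hβ₁η)
  have hσ₂ : 0 < β₂ / η := div_pos hβ₂ (hβ₂.trans hβ₂η)
  obtain ⟨q, hq⟩ : ∃ q : ℝ, 1 / q = 1 / p₁ - β₁ / η := ⟨_, one_div_one_div _⟩
  obtain ⟨s, hs⟩ : ∃ s : ℝ, 1 / s = 1 / p₂ + 1 / q := ⟨_, one_div_one_div _⟩
  have hp₁_pos : 0 < p₁ := one_div_pos.1 (by linarith)
  have hp₂_pos : 0 < p₂ := one_div_pos.1 hp₂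
  have hp₃_pos : 0 < p₃ := one_div_pos.1 (by linarith)
  have hq_pos : 0 < q := one_div_pos.1 (by linarith)
  have hs_pos : 0 < s := one_div_pos.1 (by linarith)
  obtain ⟨C₁, hC₁, hle₁⟩ := exists_lpNorm_fracInt_le hd_meas hd hd' hβ₁ hβ₁η
    (by rwa [div_lt_one hp₁_pos] at hp₁u) hq_pos hq
  obtain ⟨C₂, hC₂, hle₂⟩ := exists_lpNorm_fracInt_le hd_meas hd hd' hβ₂ hβ₂η
    (p := s) ((div_lt_one hs_pos).1 (by linarith)) hp₃_pos (by linarith)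
  refine ⟨(C₂ * C₁).toReal + 1, by positivity, fun f g hf hg => ?_⟩
  have hI : Measurable (fracInt d μ β₁ η f) := measurable_fracInt hd_meas β₁ η hf
  calc lpNorm μ p₃ (fracInt d μ β₂ η fun x => g x * fracInt d μ β₁ η f x)
      ≤ C₂ * (lpNorm μ p₂ g * (C₁ * lpNorm μ p₁ f)) :=
        (hle₂ _ (hg.mul hI)).trans <| mul_le_mul_right
          ((lpNorm_mul_le hg hI hs_pos hp₂_pos hq_pos hs).trans <|
            mul_le_mul_right (hle₁ f hf) _) _
    _ = ENNReal.ofReal (C₂ * C₁).toReal * lpNorm μ p₁ f * lpNorm μ p₂ g := by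
        rw [ofReal_toReal (by finiteness)]
        ring
    _ ≤ ENNReal.ofReal ((C₂ * C₁).toReal + 1) * lpNorm μ p₁ f * lpNorm μ p₂ g := by
        gcongr
        linarith

/-- Case `C_σ`: `‖I_{η-γ/2}(g · I_{η-γ/2}f)‖_{p₃} ≤ C ‖f‖_{p₁} ‖g‖_{p₂}` when
`σ < 1/p₁ < 1`, `0 < 1/p₂ < 1`, `2σ < 1/p₁ + 1/p₂ < 1 + σ` and
`1/p₃ = 1/p₁ + 1/p₂ - 2σ`, with `σ = (2η-γ)/(2η)`. -/
theorem statement3 {X : Type*} [MeasurableSpace X]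
    (d : X → X → ℝ) (κ : ℝ) (hκ : 1 ≤ κ) (hqm : IsQuasiMetric d κ)
    (hd_meas : Measurable fun p : X × X => d p.1 p.2)
    (μ : Measure X) (η : ℝ) (hη : 0 < η)
    (a A : ℝ) (ha : 0 < a) (haA : a ≤ A) (hAhl : IsAhlfors d μ η a A)
    (γ : ℝ) (hγ0 : 0 < γ) (hγ2η : γ < 2 * η)
    (σ : ℝ) (hσ : σ = (2 * η - γ) / (2 * η))
    (p₁ p₂ p₃ : ℝ)
    (hp₁l : σ < 1 / p₁) (hp₁u : 1 / p₁ < 1)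
    (hp₂l : 0 < 1 / p₂) (hp₂u : 1 / p₂ < 1)
    (hsum_l : 2 * σ < 1 / p₁ + 1 / p₂) (hsum_u : 1 / p₁ + 1 / p₂ < 1 + σ)
    (hp₃ : 1 / p₃ = 1 / p₁ + 1 / p₂ - 2 * σ) :
    ∃ C : ℝ, 0 < C ∧ ∀ f g : X → ℝ≥0∞, Measurable f → Measurable g →
      lpNorm μ p₁ f ≠ ⊤ → lpNorm μ p₂ g ≠ ⊤ →
      lpNorm μ p₃
          (fracInt d μ (η - γ / 2) η
            (fun x => g x * fracInt d μ (η - γ / 2) η f x)) ≤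
        ENNReal.ofReal C * lpNorm μ p₁ f * lpNorm μ p₂ g := by
  have hd : IsUpperAhlfors d μ η A := fun x r hr => (hAhl x r hr).2
  have hd' : IsUpperAhlfors (flip d) μ η A := by
    rwa [show flip d = d from funext₂ fun x y => hqm.2.2.1 y x]
  obtain rfl : σ = (η - γ / 2) / η := by rw [hσ]; field_simp
  rw [← mul_div_assoc, two_mul] at hsum_l hp₃
  obtain ⟨C, hC, hle⟩ := statement3_general hd_meas hd hd' (by linarith) (by linarith)
    (by linarith) (by linarith) hp₁l hp₁u hp₂l hsum_l hsum_u hp₃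
  exact ⟨C, hC, fun f g hf hg _ _ => hle f g hf hg⟩
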